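/- (Decay of the L^{p_c} norm and universal upper bound on the extinction time, Section 1.4.1.) Let d ≥ 3 and 0 < m < m_c, where m_c = (d−2)/d, and let p_c = d(1−m)/2. There exists a positive constant K depending only on m and d such that: if u solves the homogeneous Dirichlet problem for the FDE ∂ₜu = Δ(u^m) on a ball B ⊂ ℝ^d with nonnegative initial data u₀ ∈ L^{p_c}(B) and extinction time T, then for every 0 ≤ s ≤ t ≤ T: ‖u(t,·)‖_{L^{p_c}(B)}^{1−m} ≤ ‖u(s,·)‖_{L^{p_c}(B)}^{1−m} − K (t − s). In particular, T ≤ K^{−1} ‖u₀‖_{L^{p_c}(B)}^{1−m}. -/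

import Mathlib

open MeasureTheory Metric Set Real

/-- The spatial Laplacian of `f : ℝ^d → ℝ` at a point, as the sum of second
coordinate derivatives. -/
noncomputable def spaceLap {d : ℕ} (f : EuclideanSpace ℝ (Fin d) → ℝ)
    (x : EuclideanSpace ℝ (Fin d)) : ℝ :=
  ∑ i : Fin d, fderiv ℝ (fun y => fderiv ℝ f y (EuclideanSpace.single i 1)) x
    (EuclideanSpace.single i 1)

/-- `u` is a classical solution of the fast diffusion equation `∂ₜ u = Δ(u^m)`
on the space-time set `Q`: it is positive and smooth on `Q` and satisfies the
equation pointwise on `Q`. -/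
def IsFDESol {d : ℕ} (m : ℝ) (Q : Set (ℝ × EuclideanSpace ℝ (Fin d)))
    (u : ℝ → EuclideanSpace ℝ (Fin d) → ℝ) : Prop :=
  (∀ p ∈ Q, 0 < u p.1 p.2) ∧
  ContDiffOn ℝ (⊤ : ℕ∞) (fun p : ℝ × EuclideanSpace ℝ (Fin d) => u p.1 p.2) Q ∧
  ∀ p ∈ Q, deriv (fun s => u s p.2) p.1 = spaceLap (fun y => u p.1 y ^ m) p.2

/-- `u` solves the homogeneous Dirichlet problem for the FDE `∂ₜ u = Δ(u^m)` on the
ball `B_ρ(x₀)` with initial data `u₀` and extinction time `T`. -/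
def IsDirichletSol {d : ℕ} (m : ℝ) (x₀ : EuclideanSpace ℝ (Fin d)) (ρ T : ℝ)
    (u : ℝ → EuclideanSpace ℝ (Fin d) → ℝ) (u₀ : EuclideanSpace ℝ (Fin d) → ℝ) : Prop :=
  (∀ t ∈ Icc 0 T, ∀ x ∈ closedBall x₀ ρ, 0 ≤ u t x) ∧
  ContinuousOn (fun p : ℝ × EuclideanSpace ℝ (Fin d) => u p.1 p.2)
    (Icc 0 T ×ˢ closedBall x₀ ρ) ∧
  IsFDESol m (Ioo 0 T ×ˢ ball x₀ ρ) u ∧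
  (∀ x ∈ ball x₀ ρ, u 0 x = u₀ x) ∧
  (∀ t ∈ Ioc 0 T, ∀ x ∈ sphere x₀ ρ, u t x = 0) ∧
  (∀ x ∈ closedBall x₀ ρ, u T x = 0) ∧
  ∀ t ∈ Ioo 0 T, ∃ x ∈ ball x₀ ρ, u t x ≠ 0

/-!
Test the equation with `u ^ (p - 1)`: with `q = (p + m - 1) / 2` one has
`∇(u ^ (p - 1)) · ∇(u ^ m) = c |∇(u ^ q)|²`, so the functional `F = ∫ u ^ p` dissipates
`‖∇(u ^ q)‖₂²`. The Sobolev inequality bounds this below by `‖u ^ q‖²` in `L^(2d/(d-2))`, and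
`p = p_c` is the exponent for which `q * (2d/(d-2)) = p`. Hence `F' ≤ -κ F ^ (1 - 2/d)`, that is,
`F ^ (2/d)`, which is the `(1 - m)`-th power of the `L^p` norm, decreases at least linearly.

The solution is only continuous up to the boundary of the ball, so the integrations by parts are
done with powers of `u` that are cut off below a level `ε`. On a compact time interval they vanish
off a compact subset of the ball, and they change `F` by `O(ε)` only.
-/

open Filter Topology

section TruncPow

/-- The power `u ^ a` damped by the factor `(1 - ε / u)₊ ^ k`. Written in this form it vanishes
on all of `(-∞, ε]` as soon as `k ≠ 0`, so that for `0 < ε` it is of class `C^(k-1)` on `ℝ`. -/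
noncomputable def truncPow (ε a : ℝ) (k : ℕ) (u : ℝ) : ℝ :=
  u ^ (a - k) * max (u - ε) 0 ^ k

variable {ε a p q m u : ℝ} {k : ℕ}

lemma truncPow_eq_zero_of_le (hk : k ≠ 0) (hu : u ≤ ε) : truncPow ε a k u = 0 := by
  rw [truncPow, max_eq_right (sub_nonpos.2 hu), zero_pow hk, mul_zero]

lemma truncPow_nonneg (hu : 0 ≤ u) : 0 ≤ truncPow ε a k u := by
  unfold truncPow; positivity

lemma truncPow_eq_rpow_mul (hu : 0 < u) :
    truncPow ε a k u = u ^ a * max (1 - ε / u) 0 ^ k := by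
  have hmax : max (u - ε) 0 = u * max (1 - ε / u) 0 := by
    rw [mul_max_of_nonneg _ _ hu.le, mul_zero, mul_sub, mul_one, mul_div_cancel₀ _ hu.ne']
  rw [truncPow, hmax, mul_pow, ← mul_assoc, ← rpow_natCast u k, ← rpow_add hu, sub_add_cancel]

lemma max_one_sub_div_le_one (hε : 0 ≤ ε) (hu : 0 ≤ u) : max (1 - ε / u) 0 ≤ 1 :=
  max_le (sub_le_self _ (div_nonneg hε hu)) zero_le_one

lemma truncPow_le_rpow (hε : 0 ≤ ε) (hu : 0 < u) : truncPow ε a k u ≤ u ^ a := by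
  rw [truncPow_eq_rpow_mul hu]
  exact mul_le_of_le_one_right (rpow_nonneg hu.le _)
    (pow_le_one₀ (le_max_right _ _) (max_one_sub_div_le_one hε hu.le))

lemma truncPow_eventuallyEq_zero (hk : k ≠ 0) (hu : u < ε) : truncPow ε a k =ᶠ[𝓝 u] 0 := by
  filter_upwards [Iio_mem_nhds hu] with v hv using truncPow_eq_zero_of_le hk (le_of_lt hv)

lemma continuous_truncPow (hε : 0 < ε) (hk : k ≠ 0) : Continuous (truncPow ε a k) := by
  refine continuous_iff_continuousAt.2 fun u => ?_
  rcases lt_or_ge u ε with hu | hu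
  · exact continuousAt_const.congr (truncPow_eventuallyEq_zero hk hu).symm
  · have hu0 : u ≠ 0 := (hε.trans_le hu).ne'
    exact (continuousAt_id.rpow_const (Or.inl hu0)).mul (by fun_prop)

lemma hasDerivAt_max_zero_pow (k : ℕ) (x : ℝ) :
    HasDerivAt (fun y : ℝ => max y 0 ^ (k + 2)) ((k + 2) * max x 0 ^ (k + 1)) x := by
  have hpow (y : ℝ) : HasDerivAt (fun y : ℝ => y ^ (k + 2)) ((k + 2) * y ^ (k + 1)) y := by
    simpa using hasDerivAt_pow (k + 2) y
  rcases lt_trichotomy x 0 with hx | rfl | hx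
  · rw [max_eq_right hx.le, zero_pow k.succ_ne_zero, mul_zero]
    refine (hasDerivAt_const x (0 : ℝ)).congr_of_eventuallyEq ?_
    filter_upwards [Iio_mem_nhds hx] with y hy
    rw [max_eq_right (le_of_lt hy), zero_pow (k + 1).succ_ne_zero]
  · rw [max_self, ← hasDerivWithinAt_univ, ← Iic_union_Ici (a := (0 : ℝ))]
    refine HasDerivWithinAt.union ?_ ?_
    · rw [zero_pow k.succ_ne_zero, mul_zero]
      exact (hasDerivWithinAt_const 0 _ (0 : ℝ)).congr
        (fun y hy => by rw [max_eq_right hy, zero_pow (k + 1).succ_ne_zero]) (by simp)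
    · exact (hpow 0).hasDerivWithinAt.congr (fun y hy => by rw [max_eq_left hy]) (by simp)
  · rw [max_eq_left hx.le]
    refine (hpow x).congr_of_eventuallyEq ?_
    filter_upwards [Ioi_mem_nhds hx] with y hy
    rw [max_eq_left (le_of_lt hy)]

lemma hasDerivAt_truncPow (hε : 0 < ε) (a : ℝ) (k : ℕ) (u : ℝ) :
    HasDerivAt (truncPow ε a (k + 2))
      (a * truncPow ε (a - 1) (k + 2) u + (k + 2) * ε * truncPow ε (a - 2) (k + 1) u) u := by
  rcases lt_or_ge u ε with hu | hu
  · rw [truncPow_eq_zero_of_le (k + 1).succ_ne_zero hu.le,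
      truncPow_eq_zero_of_le k.succ_ne_zero hu.le, mul_zero, mul_zero, add_zero]
    exact (hasDerivAt_const u (0 : ℝ)).congr_of_eventuallyEq
      (truncPow_eventuallyEq_zero (k + 1).succ_ne_zero hu)
  · have hu0 : 0 < u := hε.trans_le hu
    have hmax : HasDerivAt (fun v => max (v - ε) 0 ^ (k + 2))
        ((k + 2) * max (u - ε) 0 ^ (k + 1)) u :=
      (hasDerivAt_max_zero_pow k (u - ε)).comp_sub_const u ε
    refine ((hasDerivAt_rpow_const (p := a - (k + 2 : ℕ)) (Or.inl hu0.ne')).mul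
      hmax).congr_deriv ?_
    have hexp : u ^ (a - (k + 2 : ℕ)) = u ^ (a - (k + 2 : ℕ) - 1) * u := by
      rw [← rpow_add_one hu0.ne', sub_add_cancel]
    simp only [truncPow, max_eq_left (sub_nonneg.2 hu), hexp,
      show a - 1 - (k + 2 : ℕ) = a - (k + 2 : ℕ) - 1 by ring,
      show a - 2 - (k + 1 : ℕ) = a - (k + 2 : ℕ) - 1 by push_cast; ring]
    push_cast
    ring

lemma deriv_truncPow (hε : 0 < ε) (a : ℝ) (k : ℕ) :
    deriv (truncPow ε a (k + 2)) = fun u =>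
      a * truncPow ε (a - 1) (k + 2) u + (k + 2) * ε * truncPow ε (a - 2) (k + 1) u :=
  funext fun u => (hasDerivAt_truncPow hε a k u).deriv

lemma contDiff_truncPow (hε : 0 < ε) {n : ℕ} (hk : n < k) : ContDiff ℝ n (truncPow ε a k) := by
  induction n generalizing a k with
  | zero => exact contDiff_zero.2 (continuous_truncPow hε hk.ne')
  | succ n ih =>
    obtain ⟨k, rfl⟩ : ∃ l, k = l + 2 := ⟨k - 2, by omega⟩
    push_cast
    refine contDiff_succ_iff_deriv.2
      ⟨fun u => (hasDerivAt_truncPow hε a k u).differentiableAt, by simp, ?_⟩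
    rw [deriv_truncPow hε]
    exact (contDiff_const.mul (ih (by omega))).add (contDiff_const.mul (ih (by omega)))

lemma le_deriv_deriv_truncPow (hε : 0 < ε) (hp : 1 ≤ p) (k : ℕ) (hu : 0 ≤ u) :
    p * (p - 1) * truncPow ε (p - 2) (k + 3) u ≤ deriv (deriv (truncPow ε p (k + 3))) u := by
  rw [deriv_truncPow hε p (k + 1),
    (((hasDerivAt_truncPow hε (p - 1) (k + 1) u).const_mul p).fun_add
      ((hasDerivAt_truncPow hε (p - 2) k u).const_mul (((k + 1 : ℕ) + 2) * ε))).deriv,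
    show p - 1 - 1 = p - 2 by ring, show p - 1 - 2 = p - 3 by ring,
    show p - 2 - 1 = p - 3 by ring, show p - 2 - 2 = p - 4 by ring]
  have : 0 ≤ p - 1 := sub_nonneg.2 hp
  have hsecond : 0 ≤ 2 * (p - 1) * ((k + 3) * ε * truncPow ε (p - 3) (k + 2) u) :=
    mul_nonneg (by positivity) (mul_nonneg (by positivity) (truncPow_nonneg hu))
  have hthird : 0 ≤ (k + 3) * ε * ((k + 2) * ε * truncPow ε (p - 4) (k + 1) u) :=
    mul_nonneg (by positivity) (mul_nonneg (by positivity) (truncPow_nonneg hu))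
  push_cast
  linear_combination hsecond + hthird

lemma deriv_truncPow_nonneg (hε : 0 < ε) (ha : 0 ≤ a) (k : ℕ) (hu : 0 ≤ u) :
    0 ≤ deriv (truncPow ε a (k + 2)) u := by
  rw [deriv_truncPow hε]
  exact add_nonneg (mul_nonneg ha (truncPow_nonneg hu))
    (mul_nonneg (by positivity) (truncPow_nonneg hu))

lemma deriv_truncPow_le (hε : 0 < ε) (ha : 0 ≤ a) (k : ℕ) (hu : 0 < u) :
    deriv (truncPow ε a (k + 2)) u ≤ (a + k + 2) * truncPow ε (a - 1) (k + 1) u := by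
  rcases le_or_gt u ε with huε | huε
  · simp [deriv_truncPow hε, truncPow_eq_zero_of_le _ huε]
  simp only [deriv_truncPow hε, truncPow_eq_rpow_mul hu]
  set r := max (1 - ε / u) 0
  have hr0 : 0 ≤ r := le_max_right _ _
  have hr1 : r ≤ 1 := max_one_sub_div_le_one hε.le hu.le
  have hpow : r ^ (k + 2) ≤ r ^ (k + 1) := pow_le_pow_of_le_one hr0 hr1 (by omega)
  have hexp : ε * u ^ (a - 2) ≤ u ^ (a - 1) := by
    rw [show a - 1 = a - 2 + 1 by ring, rpow_add_one hu.ne', mul_comm]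
    gcongr
  calc a * (u ^ (a - 1) * r ^ (k + 2)) + (k + 2) * ε * (u ^ (a - 2) * r ^ (k + 1))
      = a * (u ^ (a - 1) * r ^ (k + 2)) + (k + 2) * (ε * u ^ (a - 2) * r ^ (k + 1)) := by ring
    _ ≤ a * (u ^ (a - 1) * r ^ (k + 1)) + (k + 2) * (u ^ (a - 1) * r ^ (k + 1)) := by gcongr
    _ = (a + k + 2) * (u ^ (a - 1) * r ^ (k + 1)) := by ring

/-- The constant `c` in the dissipation inequality `c |∇ u ^ q| ^ 2 ≤ ∇ u ^ (p - 1) · ∇ u ^ m`,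
`2 q = p + m - 1`, for the truncated powers with damping exponent `3`. -/
noncomputable def dissipationConst (m p q : ℝ) : ℝ :=
  m * p * (p - 1) / (q + 3) ^ 2

lemma dissipationConst_pos (hm : 0 < m) (hp : 1 < p) (hq : 0 < q) :
    0 < dissipationConst m p q := by
  have : 0 < p - 1 := sub_pos.2 hp
  unfold dissipationConst
  positivity

-- Squaring the derivative turns the damping exponent `3 - 1` into `4`, which beats the `3` on
-- the right because the damping factor is at most `1`.
lemma dissipationConst_mul_sq_deriv_truncPow_le (hε : 0 < ε) (hm : 0 < m) (hp : 1 < p)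
    (hq : 0 < q) (hpq : 2 * q = p + m - 1) (hu : 0 < u) :
    dissipationConst m p q * deriv (truncPow ε q 3) u ^ 2 ≤
      deriv (deriv (truncPow ε p 3)) u * deriv (fun v => v ^ m) u := by
  rw [Real.deriv_rpow_const]
  have hp1 : 0 < p - 1 := sub_pos.2 hp
  have hderiv : deriv (truncPow ε q 3) u ≤ (q + 3) * truncPow ε (q - 1) 2 u :=
    (deriv_truncPow_le hε hq.le 1 hu).trans_eq (by push_cast; ring)
  have hsq : truncPow ε (q - 1) 2 u ^ 2 ≤ truncPow ε (p - 2) 3 u * u ^ (m - 1) := by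
    have hexp : (u ^ (q - 1)) ^ 2 = u ^ (p - 2) * u ^ (m - 1) := by
      rw [← rpow_add hu, ← rpow_natCast, ← rpow_mul hu.le]
      congr 1
      push_cast
      linarith
    rw [truncPow_eq_rpow_mul hu, truncPow_eq_rpow_mul hu, mul_pow, hexp, ← pow_mul,
      mul_right_comm]
    have hpow : max (1 - ε / u) 0 ^ (2 * 2) ≤ max (1 - ε / u) 0 ^ 3 :=
      pow_le_pow_of_le_one (le_max_right _ _) (max_one_sub_div_le_one hε.le hu.le) (by norm_num)
    gcongr
  calc dissipationConst m p q * deriv (truncPow ε q 3) u ^ 2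
      ≤ dissipationConst m p q * ((q + 3) * truncPow ε (q - 1) 2 u) ^ 2 := by
        have := dissipationConst_pos hm hp hq
        have := deriv_truncPow_nonneg hε hq.le 1 hu.le
        gcongr
    _ = m * p * (p - 1) * truncPow ε (q - 1) 2 u ^ 2 := by
        unfold dissipationConst
        field_simp
    _ ≤ m * p * (p - 1) * (truncPow ε (p - 2) 3 u * u ^ (m - 1)) := by gcongr
    _ = p * (p - 1) * truncPow ε (p - 2) 3 u * (m * u ^ (m - 1)) := by ring
    _ ≤ deriv (deriv (truncPow ε p 3)) u * (m * u ^ (m - 1)) := by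
        gcongr
        exact le_deriv_deriv_truncPow hε hp.le 0 hu.le

lemma one_sub_mul_le_max_one_sub_rpow {N x : ℝ} (hN : 1 ≤ N) :
    1 - N * x ≤ max (1 - x) 0 ^ N := by
  rcases le_or_gt x 1 with hx | hx
  · rw [max_eq_left (sub_nonneg.2 hx)]
    simpa [← sub_eq_add_neg] using
      one_add_mul_self_le_rpow_one_add (s := -x) (neg_le_neg hx) hN
  · have : 0 ≤ max (1 - x) 0 ^ N := rpow_nonneg (le_max_right _ _) _
    nlinarith

lemma rpow_sub_le_rpow_mul_max_rpow {N M : ℝ} (hε : 0 ≤ ε) (hp : 1 ≤ p) (hN : 1 ≤ N)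
    (hu : 0 < u) (huM : u ≤ M) :
    u ^ p - N * ε * M ^ (p - 1) ≤ u ^ p * max (1 - ε / u) 0 ^ N := by
  have hmono : u ^ (p - 1) ≤ M ^ (p - 1) := rpow_le_rpow hu.le huM (sub_nonneg.2 hp)
  calc u ^ p - N * ε * M ^ (p - 1) ≤ u ^ p - N * ε * u ^ (p - 1) := by gcongr
    _ = u ^ p * (1 - N * (ε / u)) := by rw [rpow_sub_one hu.ne']; ring
    _ ≤ u ^ p * max (1 - ε / u) 0 ^ N := by
        gcongr
        exact one_sub_mul_le_max_one_sub_rpow hN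

lemma rpow_sub_le_truncPow_rpow {s M : ℝ} (hε : 0 ≤ ε) (hp : 1 ≤ p) (hk : 1 ≤ k * s)
    (hqs : q * s = p) (hu : 0 < u) (huM : u ≤ M) :
    u ^ p - k * s * ε * M ^ (p - 1) ≤ truncPow ε q k u ^ s := by
  have hr : 0 ≤ max (1 - ε / u) 0 := le_max_right _ _
  refine (rpow_sub_le_rpow_mul_max_rpow hε hp hk hu huM).trans_eq ?_
  rw [truncPow_eq_rpow_mul hu, mul_rpow (by positivity) (by positivity), ← rpow_mul hu.le, hqs,
    ← rpow_natCast, ← rpow_mul hr]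

end TruncPow

section VanishingOffCompact

variable {E : Type*} [TopologicalSpace E] {U K : Set E} {f g : E → ℝ}

lemma tsupport_indicator_subset (hK : IsClosed K) (hg : ∀ x ∈ U \ K, g x = 0) :
    tsupport (U.indicator g) ⊆ K := by
  refine closure_minimal (fun x hx => ?_) hK
  rw [Function.mem_support, ne_eq, indicator_apply_eq_zero, Classical.not_imp] at hx
  exact by_contra fun hxK => hx.2 (hg x ⟨hx.1, hxK⟩)

lemma hasCompactSupport_indicator [T2Space E] (hK : IsCompact K)
    (hg : ∀ x ∈ U \ K, g x = 0) : HasCompactSupport (U.indicator g) :=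
  hK.of_isClosed_subset (isClosed_tsupport _) (tsupport_indicator_subset hK.isClosed hg)

variable [MeasurableSpace E] [OpensMeasurableSpace E] {μ : Measure E}
  [IsFiniteMeasureOnCompacts μ]

lemma integrable_mul_of_tsupport_subset (hU : IsOpen U) (hf : Continuous f)
    (hfc : HasCompactSupport f) (hfU : tsupport f ⊆ U) (hg : ContinuousOn g U) :
    Integrable (fun x => f x * g x) μ := by
  have hcont : Continuous fun x => f x * g x := continuous_of_tsupport fun x hx =>
    hf.continuousAt.mul (hg.continuousAt (hU.mem_nhds (hfU (tsupport_mul_subset_left hx))))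
  exact hcont.integrable_of_hasCompactSupport hfc.mul_right

variable [T2Space E]

lemma integrableOn_of_eq_zero_off_compact (hU : MeasurableSet U) (hK : IsCompact K)
    (hKU : K ⊆ U) (hg : ContinuousOn g U) (hg0 : ∀ x ∈ U \ K, g x = 0) : IntegrableOn g U μ :=
  ((hg.mono hKU).integrableOn_compact hK).of_forall_sdiff_eq_zero hU hg0

lemma hasDerivAt_setIntegral_of_eq_zero_off_compact {f f' : ℝ → E → ℝ} {I : Set ℝ} {t : ℝ}
    (hI : IsCompact I) (ht : I ∈ 𝓝 t) (hU : MeasurableSet U) (hK : IsCompact K) (hKU : K ⊆ U)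
    (hf : ∀ τ ∈ I, ContinuousOn (f τ) U)
    (hf' : ContinuousOn (fun z : ℝ × E => f' z.1 z.2) (I ×ˢ U))
    (hderiv : ∀ τ ∈ I, ∀ x ∈ U, HasDerivAt (fun σ => f σ x) (f' τ x) τ)
    (hf0 : ∀ τ ∈ I, ∀ x ∈ U \ K, f τ x = 0) (hf'0 : ∀ τ ∈ I, ∀ x ∈ U \ K, f' τ x = 0) :
    HasDerivAt (fun τ => ∫ x in U, f τ x ∂μ) (∫ x in U, f' t x ∂μ) t := by
  have htI : t ∈ I := mem_of_mem_nhds ht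
  obtain ⟨C, hC⟩ :=
    (hI.prod hK).exists_bound_of_continuousOn (hf'.mono (prod_mono_right hKU))
  have hslice : ContinuousOn (f' t) U :=
    hf'.comp (f := fun x => (t, x)) (by fun_prop) fun x hx => ⟨htI, hx⟩
  have hbound : ∀ x ∈ U, ∀ τ ∈ I, ‖f' τ x‖ ≤ K.indicator (fun _ => C) x := by
    intro x hx τ hτ
    by_cases hxK : x ∈ K
    · simpa only [indicator_of_mem hxK] using hC (τ, x) ⟨hτ, hxK⟩
    · simp only [indicator_of_notMem hxK, hf'0 τ hτ x ⟨hx, hxK⟩, norm_zero, le_refl]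
  have hKmeas : MeasurableSet K := hK.measurableSet
  refine (hasDerivAt_integral_of_dominated_loc_of_deriv_le ht ?_ ?_ ?_
    (bound := K.indicator fun _ => C) ?_ ?_ ?_).2
  · filter_upwards [ht] with τ hτ
    exact (integrableOn_of_eq_zero_off_compact hU hK hKU (hf τ hτ)
      (hf0 τ hτ)).aestronglyMeasurable
  · exact integrableOn_of_eq_zero_off_compact hU hK hKU (hf t htI) (hf0 t htI)
  · exact (integrableOn_of_eq_zero_off_compact hU hK hKU hslice (hf'0 t htI)).aestronglyMeasurable
  · exact (ae_restrict_mem hU).mono hbound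
  · exact ((integrable_indicator_iff hKmeas).2
      (integrableOn_const hK.measure_lt_top.ne)).integrableOn
  · exact (ae_restrict_mem hU).mono fun x hx τ hτ => hderiv τ hτ x hx

end VanishingOffCompact

section Indicator

variable {E : Type*} [NormedAddCommGroup E] [NormedSpace ℝ E] {U : Set E} {g : E → ℝ}

lemma contDiff_indicator {n : WithTop ℕ∞} (hU : IsOpen U) (hgU : tsupport (U.indicator g) ⊆ U)
    (hg : ContDiffOn ℝ n g U) : ContDiff ℝ n (U.indicator g) :=
  contDiff_iff_contDiffAt.2 fun x => by
    by_cases hx : x ∈ tsupport (U.indicator g)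
    · exact (hg.contDiffAt (hU.mem_nhds (hgU hx))).congr_of_eventuallyEq
        (eqOn_indicator.eventuallyEq_of_mem (hU.mem_nhds (hgU hx)))
    · exact contDiffAt_const.congr_of_eventuallyEq (notMem_tsupport_iff_eventuallyEq.1 hx)

lemma fderiv_indicator_comp {φ : ℝ → ℝ} {x : E} (hU : IsOpen U) (hx : x ∈ U)
    (hφ : DifferentiableAt ℝ φ (g x)) (hg : DifferentiableAt ℝ g x) :
    fderiv ℝ (U.indicator fun y => φ (g y)) x = deriv φ (g x) • fderiv ℝ g x := by
  rw [(eqOn_indicator.eventuallyEq_of_mem (hU.mem_nhds hx)).fderiv_eq]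
  exact (hφ.hasDerivAt.comp_hasFDerivAt x hg.hasFDerivAt).fderiv

end Indicator

section Sobolev

variable {E F : Type*} [NormedAddCommGroup E] [NormedSpace ℝ E] [FiniteDimensional ℝ E]
  [MeasurableSpace E] [BorelSpace E] (μ : Measure E) [μ.IsAddHaarMeasure]
  [NormedAddCommGroup F] [InnerProductSpace ℝ F]

lemma exists_integral_norm_rpow_le_integral_norm_fderiv_rpow {p p' : NNReal} (hp : 1 ≤ p)
    (hp'0 : p' ≠ 0) (hE : 0 < Module.finrank ℝ E)
    (hp' : (p' : ℝ)⁻¹ = (p : ℝ)⁻¹ - (Module.finrank ℝ E : ℝ)⁻¹) :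
    ∃ C : ℝ, 0 < C ∧ ∀ f : E → F, ContDiff ℝ 1 f → HasCompactSupport f →
      (∫ x, ‖f x‖ ^ (p' : ℝ) ∂μ) ^ (p / p' : ℝ) ≤ C * ∫ x, ‖fderiv ℝ f x‖ ^ (p : ℝ) ∂μ := by
  have hp0 : (p : ℝ) ≠ 0 := by positivity
  set C₀ : NNReal := eLpNormLESNormFDerivOfEqInnerConst μ p
  refine ⟨(C₀ + 1 : ℝ) ^ (p : ℝ), by positivity, fun f hf hfc => ?_⟩
  set A := ∫ x, ‖f x‖ ^ (p' : ℝ) ∂μ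
  set D := ∫ x, ‖fderiv ℝ f x‖ ^ (p : ℝ) ∂μ
  have hA : 0 ≤ A := integral_nonneg fun x => by positivity
  have hD : 0 ≤ D := integral_nonneg fun x => by positivity
  have hsobolev : A ^ (p' : ℝ)⁻¹ ≤ C₀ * D ^ (p : ℝ)⁻¹ := by
    have hfLp : MemLp f p' μ := hf.continuous.memLp_of_hasCompactSupport hfc
    have hf'Lp : MemLp (fderiv ℝ f) p μ :=
      (hf.continuous_fderiv one_ne_zero).memLp_of_hasCompactSupport (hfc.fderiv ℝ)
    have h := eLpNorm_le_eLpNorm_fderiv_of_eq_inner μ hf hfc hp hE hp'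
    rwa [hfLp.eLpNorm_eq_integral_rpow_norm (by simpa using hp'0) ENNReal.coe_ne_top,
      hf'Lp.eLpNorm_eq_integral_rpow_norm (by positivity) ENNReal.coe_ne_top,
      ENNReal.coe_toReal, ENNReal.coe_toReal, ← ENNReal.ofReal_coe_nnreal,
      ← ENNReal.ofReal_mul C₀.coe_nonneg, ENNReal.ofReal_le_ofReal_iff (by positivity)] at h
  calc A ^ (p / p' : ℝ) = (A ^ (p' : ℝ)⁻¹) ^ (p : ℝ) := by
        rw [← rpow_mul hA, div_eq_inv_mul]
    _ ≤ (C₀ * D ^ (p : ℝ)⁻¹) ^ (p : ℝ) := by gcongr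
    _ = (C₀ : ℝ) ^ (p : ℝ) * D := by
        rw [mul_rpow C₀.coe_nonneg (by positivity), rpow_inv_rpow hD hp0]
    _ ≤ (C₀ + 1 : ℝ) ^ (p : ℝ) * D := by
        gcongr
        exact le_add_of_nonneg_right zero_le_one

end Sobolev

section Energy

variable {d : ℕ} {U K : Set (EuclideanSpace ℝ (Fin d))} {f v w : EuclideanSpace ℝ (Fin d) → ℝ}

lemma sum_sq_apply_single_eq_norm_sq (L : EuclideanSpace ℝ (Fin d) →L[ℝ] ℝ) :
    ∑ i, L (EuclideanSpace.single i 1) ^ 2 = ‖L‖ ^ 2 := by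
  simpa using ((EuclideanSpace.basisFun (Fin d) ℝ).norm_dual L).symm

lemma integrable_norm_fderiv_sq (hf : ContDiff ℝ 1 f) (hfc : HasCompactSupport f) :
    Integrable fun x => ‖fderiv ℝ f x‖ ^ 2 := by
  have hsupp : HasCompactSupport fun x => ‖fderiv ℝ f x‖ ^ 2 :=
    (hfc.fderiv ℝ).mono fun x hx hx0 => hx (by simp [hx0])
  exact ((hf.continuous_fderiv one_ne_zero).norm.pow 2).integrable_of_hasCompactSupport hsupp

lemma integrable_fderiv_single_mul_fderiv_single (hU : IsOpen U) (hf : ContDiff ℝ 1 f)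
    (hfc : HasCompactSupport f) (hfU : tsupport f ⊆ U) (hv : ContDiffOn ℝ 1 v U) (i : Fin d) :
    Integrable fun x => fderiv ℝ f x (EuclideanSpace.single i 1) *
      fderiv ℝ v x (EuclideanSpace.single i 1) :=
  integrable_mul_of_tsupport_subset hU
    ((hf.continuous_fderiv one_ne_zero).clm_apply continuous_const) (hfc.fderiv_apply ℝ _)
    ((tsupport_fderiv_apply_subset ℝ _).trans hfU)
    ((hv.continuousOn_fderiv_of_isOpen hU le_rfl).clm_apply continuousOn_const)

lemma integral_mul_spaceLap (hU : IsOpen U) (hf : ContDiff ℝ 1 f) (hfc : HasCompactSupport f)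
    (hfU : tsupport f ⊆ U) (hv : ContDiffOn ℝ 2 v U) :
    ∫ x, f x * spaceLap v x = -∫ x, ∑ i, fderiv ℝ f x (EuclideanSpace.single i 1) *
      fderiv ℝ v x (EuclideanSpace.single i 1) := by
  have hf'v' := integrable_fderiv_single_mul_fderiv_single hU hf hfc hfU (hv.of_le one_le_two)
  have hv' (i : Fin d) :
      ContDiffOn ℝ 1 (fun y => fderiv ℝ v y (EuclideanSpace.single i 1)) U :=
    (hv.fderiv_of_isOpen hU (by norm_num)).clm_apply contDiffOn_const
  have hfv'' (i : Fin d) : Integrable fun x => f x *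
      fderiv ℝ (fun y => fderiv ℝ v y (EuclideanSpace.single i 1)) x
        (EuclideanSpace.single i 1) :=
    integrable_mul_of_tsupport_subset hU hf.continuous hfc hfU
      (((hv' i).continuousOn_fderiv_of_isOpen hU le_rfl).clm_apply continuousOn_const)
  simp only [spaceLap, Finset.mul_sum]
  rw [integral_finsetSum _ fun i _ => hfv'' i, integral_finsetSum _ fun i _ => hf'v' i,
    ← Finset.sum_neg_distrib]
  refine Finset.sum_congr rfl fun i _ => ?_
  exact integral_mul_fderiv_eq_neg_fderiv_mul_of_integrable (hf'v' i) (hfv'' i)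
    (integrable_mul_of_tsupport_subset hU hf.continuous hfc hfU (hv' i).continuousOn)
    (fun x _ => hf.differentiable one_ne_zero x)
    (fun x hx => ((hv' i).contDiffAt (hU.mem_nhds (hfU hx))).differentiableAt one_ne_zero)

lemma deriv_eq_zero_of_eqOn_Iic {G : ℝ → ℝ} {ε r : ℝ} (hG : EqOn G 0 (Iic ε)) (hr : r ≤ ε) :
    deriv G r = 0 := by
  by_cases hd : DifferentiableAt ℝ G r
  · rw [← hd.derivWithin (uniqueDiffOn_Iic ε r hr), derivWithin_congr hG (hG hr), derivWithin_zero,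
      Pi.zero_apply]
  · exact deriv_zero_of_not_differentiableAt hd

variable {G H Φ : ℝ → ℝ} {ε c : ℝ}

lemma mul_norm_sq_fderiv_indicator_comp_le (hU : IsOpen U) (hw : ContDiffOn ℝ 2 w U)
    (hpos : ∀ x ∈ U, 0 < w x) (hG : ContDiff ℝ 2 G) (hH : ContDiff ℝ 1 H)
    (hΦ : ContDiffOn ℝ 2 Φ (Ioi 0))
    (hGHΦ : ∀ r > 0, c * deriv H r ^ 2 ≤ deriv (deriv G) r * deriv Φ r)
    {x : EuclideanSpace ℝ (Fin d)} (hx : x ∈ U) :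
    c * ‖fderiv ℝ (U.indicator fun y => H (w y)) x‖ ^ 2 ≤
      ∑ i, fderiv ℝ (U.indicator fun y => deriv G (w y)) x (EuclideanSpace.single i 1) *
        fderiv ℝ (fun y => Φ (w y)) x (EuclideanSpace.single i 1) := by
  have hw' : DifferentiableAt ℝ w x :=
    (hw.contDiffAt (hU.mem_nhds hx)).differentiableAt two_ne_zero
  have hG' : ContDiff ℝ 1 (deriv G) := hG.deriv'
  have hΦ' : DifferentiableAt ℝ Φ (w x) :=
    (hΦ.contDiffAt (Ioi_mem_nhds (hpos x hx))).differentiableAt two_ne_zero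
  rw [fderiv_indicator_comp hU hx (hH.differentiable one_ne_zero _) hw',
    fderiv_indicator_comp hU hx (hG'.differentiable one_ne_zero _) hw',
    show fderiv ℝ (fun y => Φ (w y)) x = _ from
      (hΦ'.hasDerivAt.comp_hasFDerivAt x hw'.hasFDerivAt).fderiv,
    norm_smul, mul_pow, norm_eq_abs, sq_abs]
  calc c * (deriv H (w x) ^ 2 * ‖fderiv ℝ w x‖ ^ 2)
      = c * deriv H (w x) ^ 2 * ‖fderiv ℝ w x‖ ^ 2 := by ring
    _ ≤ deriv (deriv G) (w x) * deriv Φ (w x) * ‖fderiv ℝ w x‖ ^ 2 := by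
        gcongr ?_ * _
        exact hGHΦ _ (hpos x hx)
    _ = _ := by
        rw [← sum_sq_apply_single_eq_norm_sq, Finset.mul_sum]
        refine Finset.sum_congr rfl fun i _ => ?_
        simp only [smul_apply, smul_eq_mul]
        ring

lemma setIntegral_mul_spaceLap (hU : IsOpen U) (hK : IsCompact K) (hKU : K ⊆ U)
    (hf : ContDiffOn ℝ 1 f U) (hf0 : ∀ x ∈ U \ K, f x = 0) (hv : ContDiffOn ℝ 2 v U) :
    ∫ x in U, f x * spaceLap v x =
      -∫ x, ∑ i, fderiv ℝ (U.indicator f) x (EuclideanSpace.single i 1) *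
        fderiv ℝ v x (EuclideanSpace.single i 1) := by
  have hsupp : tsupport (U.indicator f) ⊆ K := tsupport_indicator_subset hK.isClosed hf0
  rw [← integral_mul_spaceLap hU (contDiff_indicator hU (hsupp.trans hKU) hf)
    (hasCompactSupport_indicator hK hf0) (hsupp.trans hKU) hv,
    ← integral_indicator hU.measurableSet]
  simp only [indicator_mul_left]

lemma setIntegral_deriv_comp_mul_spaceLap_le (hU : IsOpen U) (hK : IsCompact K) (hKU : K ⊆ U)
    (hw : ContDiffOn ℝ 2 w U) (hpos : ∀ x ∈ U, 0 < w x) (hwε : ∀ x ∈ U \ K, w x ≤ ε)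
    (hG : ContDiff ℝ 2 G) (hG0 : EqOn G 0 (Iic ε)) (hH : ContDiff ℝ 1 H)
    (hH0 : EqOn H 0 (Iic ε)) (hΦ : ContDiffOn ℝ 2 Φ (Ioi 0))
    (hGHΦ : ∀ r > 0, c * deriv H r ^ 2 ≤ deriv (deriv G) r * deriv Φ r) :
    ∫ x in U, deriv G (w x) * spaceLap (fun y => Φ (w y)) x ≤
      -(c * ∫ x, ‖fderiv ℝ (U.indicator fun y => H (w y)) x‖ ^ 2) := by
  have hw1 : ContDiffOn ℝ 1 w U := hw.of_le one_le_two
  have hv : ContDiffOn ℝ 2 (fun y => Φ (w y)) U := hΦ.comp hw hpos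
  have hG'w : ContDiffOn ℝ 1 (fun y => deriv G (w y)) U := hG.deriv'.comp_contDiffOn hw1
  have hG'w0 : ∀ x ∈ U \ K, deriv G (w x) = 0 := fun x hx =>
    deriv_eq_zero_of_eqOn_Iic hG0 (hwε x hx)
  have hG'K := tsupport_indicator_subset hK.isClosed hG'w0
  have hHw0 : ∀ x ∈ U \ K, H (w x) = 0 := fun x hx => hH0 (hwε x hx)
  have hHK := tsupport_indicator_subset hK.isClosed hHw0
  have hint : Integrable fun x => ‖fderiv ℝ (U.indicator fun y => H (w y)) x‖ ^ 2 :=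
    integrable_norm_fderiv_sq (contDiff_indicator hU (hHK.trans hKU) (hH.comp_contDiffOn hw1))
      (hasCompactSupport_indicator hK hHw0)
  rw [setIntegral_mul_spaceLap hU hK hKU hG'w hG'w0 hv, neg_le_neg_iff, ← integral_const_mul]
  refine integral_mono (hint.const_mul c) (integrable_finsetSum _ fun i _ =>
    integrable_fderiv_single_mul_fderiv_single hU (contDiff_indicator hU (hG'K.trans hKU) hG'w)
      (hasCompactSupport_indicator hK hG'w0) (hG'K.trans hKU)
      (hv.of_le one_le_two) i) fun x => ?_
  by_cases hx : x ∈ U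
  · exact mul_norm_sq_fderiv_indicator_comp_le hU hw hpos hG hH hΦ hGHΦ hx
  · have hH' := fderiv_of_notMem_tsupport (𝕜 := ℝ) fun hxH => hx (hKU (hHK hxH))
    have hG' := fderiv_of_notMem_tsupport (𝕜 := ℝ) fun hxG => hx (hKU (hG'K hxG))
    simp [hH', hG']

end Energy

section DifferentialInequality

variable {s t κ θ : ℝ}

lemma rpow_le_rpow_sub_of_hasDerivAt_le {Y D : ℝ → ℝ} (hst : s ≤ t) (hθ : θ < 1)
    (hY : ∀ τ ∈ Icc s t, HasDerivAt Y (D τ) τ) (hpos : ∀ τ ∈ Icc s t, 0 < Y τ)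
    (hD : ∀ τ ∈ Icc s t, D τ ≤ -(κ * Y τ ^ θ)) :
    Y t ^ (1 - θ) ≤ Y s ^ (1 - θ) - (1 - θ) * κ * (t - s) := by
  have hderiv : ∀ τ ∈ Icc s t,
      HasDerivAt (fun σ => Y σ ^ (1 - θ)) (D τ * (1 - θ) * Y τ ^ (1 - θ - 1)) τ :=
    fun τ hτ => (hY τ hτ).rpow_const (Or.inl (hpos τ hτ).ne')
  have hbound : ∀ τ ∈ Icc s t, D τ * (1 - θ) * Y τ ^ (1 - θ - 1) ≤ -((1 - θ) * κ) := by
    intro τ hτ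
    have : 0 < 1 - θ := sub_pos.2 hθ
    have hYτ := hpos τ hτ
    have hcancel : Y τ ^ θ * Y τ ^ (1 - θ - 1) = 1 := by
      rw [← rpow_add hYτ, show θ + (1 - θ - 1) = 0 by ring, rpow_zero]
    calc D τ * (1 - θ) * Y τ ^ (1 - θ - 1)
        ≤ -(κ * Y τ ^ θ) * (1 - θ) * Y τ ^ (1 - θ - 1) := by
          gcongr
          exact hD τ hτ
      _ = -((1 - θ) * κ) * (Y τ ^ θ * Y τ ^ (1 - θ - 1)) := by ring
      _ = -((1 - θ) * κ) := by rw [hcancel, mul_one]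
  have hmean := (convex_Icc s t).image_sub_le_mul_sub_of_deriv_le
    (fun τ hτ => (hderiv τ hτ).continuousAt.continuousWithinAt)
    (fun τ hτ => (hderiv τ (interior_subset hτ)).differentiableAt.differentiableWithinAt)
    (fun τ hτ => (hderiv τ (interior_subset hτ)).deriv.trans_le (hbound τ (interior_subset hτ)))
    s (left_mem_Icc.2 hst) t (right_mem_Icc.2 hst) hst
  linarith

lemma antitoneOn_Icc_of_hasDerivAt_nonpos {Y D : ℝ → ℝ}
    (hY : ∀ τ ∈ Icc s t, HasDerivAt Y (D τ) τ) (hD : ∀ τ ∈ Icc s t, D τ ≤ 0) :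
    AntitoneOn Y (Icc s t) :=
  antitoneOn_of_deriv_nonpos (convex_Icc s t)
    (fun τ hτ => (hY τ hτ).continuousAt.continuousWithinAt)
    (fun τ hτ => (hY τ (interior_subset hτ)).differentiableAt.differentiableWithinAt)
    fun τ hτ => (hY τ (interior_subset hτ)).deriv.trans_le (hD τ (interior_subset hτ))

-- Shifting `Y` by `δ` puts the powers of `Y - δ` below those of `F - δ`, so that the differential
-- inequality closes.
lemma sub_two_mul_rpow_le_of_approx {F Y D : ℝ → ℝ} {δ : ℝ} (hst : s ≤ t) (hκ : 0 ≤ κ)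
    (hθ0 : 0 ≤ θ) (hθ1 : θ < 1) (hδF : 2 * δ < F t)
    (hY : ∀ τ ∈ Icc s t, HasDerivAt Y (D τ) τ) (hFY : ∀ τ ∈ Icc s t, F τ - δ ≤ Y τ)
    (hYF : ∀ τ ∈ Icc s t, Y τ ≤ F τ)
    (hD : ∀ τ ∈ Icc s t, D τ ≤ -(κ * max (F τ - δ) 0 ^ θ)) :
    (F t - 2 * δ) ^ (1 - θ) ≤ F s ^ (1 - θ) - (1 - θ) * κ * (t - s) := by
  have hs : s ∈ Icc s t := left_mem_Icc.2 hst
  have ht : t ∈ Icc s t := right_mem_Icc.2 hst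
  have hanti : AntitoneOn Y (Icc s t) := antitoneOn_Icc_of_hasDerivAt_nonpos hY fun τ hτ =>
    (hD τ hτ).trans (neg_nonpos.2 (by positivity))
  have hpos : ∀ τ ∈ Icc s t, 0 < Y τ - δ := fun τ hτ => by
    linarith [hanti hτ ht hτ.2, hFY t ht]
  have hdecay : (Y t - δ) ^ (1 - θ) ≤ (Y s - δ) ^ (1 - θ) - (1 - θ) * κ * (t - s) := by
    refine rpow_le_rpow_sub_of_hasDerivAt_le (Y := fun τ => Y τ - δ) hst hθ1
      (fun τ hτ => (hY τ hτ).sub_const δ) hpos fun τ hτ => (hD τ hτ).trans (neg_le_neg ?_)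
    have hle : Y τ - δ ≤ max (F τ - δ) 0 := le_max_of_le_left (by linarith [hYF τ hτ])
    have := (hpos τ hτ).le
    gcongr
  have hstart : (Y s - δ) ^ (1 - θ) ≤ F s ^ (1 - θ) :=
    rpow_le_rpow (hpos s hs).le (by linarith [hFY s hs, hYF s hs]) (sub_pos.2 hθ1).le
  have hend : (F t - 2 * δ) ^ (1 - θ) ≤ (Y t - δ) ^ (1 - θ) :=
    rpow_le_rpow (by linarith) (by linarith [hFY t ht]) (sub_pos.2 hθ1).le
  linarith

lemma rpow_le_rpow_sub_of_forall_approx {F : ℝ → ℝ} (hst : s ≤ t) (hκ : 0 ≤ κ)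
    (hθ0 : 0 ≤ θ) (hθ1 : θ < 1) (hF : 0 < F t)
    (happrox : ∀ δ > 0, ∃ Y D : ℝ → ℝ, ∀ τ ∈ Icc s t, HasDerivAt Y (D τ) τ ∧ F τ - δ ≤ Y τ ∧
      Y τ ≤ F τ ∧ D τ ≤ -(κ * max (F τ - δ) 0 ^ θ)) :
    F t ^ (1 - θ) ≤ F s ^ (1 - θ) - (1 - θ) * κ * (t - s) := by
  have hlim : Tendsto (fun δ => (F t - 2 * δ) ^ (1 - θ)) (𝓝[>] 0) (𝓝 (F t ^ (1 - θ))) := by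
    have hcont : ContinuousAt (fun δ : ℝ => (F t - 2 * δ) ^ (1 - θ)) 0 :=
      ContinuousAt.rpow_const (by fun_prop) (Or.inr (sub_pos.2 hθ1).le)
    simpa using hcont.tendsto.mono_left nhdsWithin_le_nhds
  refine le_of_tendsto hlim ?_
  filter_upwards [Ioo_mem_nhdsGT (half_pos hF)] with δ hδ
  obtain ⟨Y, D, hYD⟩ := happrox δ hδ.1
  exact sub_two_mul_rpow_le_of_approx hst hκ hθ0 hθ1 (by linarith [hδ.2])
    (fun τ hτ => (hYD τ hτ).1) (fun τ hτ => (hYD τ hτ).2.1) (fun τ hτ => (hYD τ hτ).2.2.1)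
    fun τ hτ => (hYD τ hτ).2.2.2

lemma antitoneOn_Icc_of_antitoneOn_Ioo {f : ℝ → ℝ} {a b : ℝ} (hf : ContinuousOn f (Icc a b))
    (h : AntitoneOn f (Ioo a b)) : AntitoneOn f (Icc a b) := by
  intro s hs t ht hst
  rcases hst.eq_or_lt with rfl | hst
  · rfl
  obtain ⟨c, hsc, hct⟩ := exists_between hst
  have hc : c ∈ Ioo a b := ⟨hs.1.trans_lt hsc, hct.trans_le ht.2⟩
  have hleft : Ioo s c ⊆ Ioo a b := Ioo_subset_Ioo hs.1 hc.2.le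
  have hright : Ioo c t ⊆ Ioo a b := Ioo_subset_Ioo hc.1.le ht.2
  calc f t ≤ f c :=
        ContinuousWithinAt.closure_le (by simp [closure_Ioo hct.ne, hct.le])
          ((hf t ht).mono (hright.trans Ioo_subset_Icc_self)) continuousWithinAt_const
          fun τ hτ => h hc (hright hτ) hτ.1.le
    _ ≤ f s :=
        ContinuousWithinAt.closure_le (by simp [closure_Ioo hsc.ne, hsc.le])
          continuousWithinAt_const ((hf s hs).mono (hleft.trans Ioo_subset_Icc_self))
          fun τ hτ => h (hleft hτ) hc hτ.2.le

end DifferentialInequality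

section TruncatedIntegral

variable {E : Type*} [TopologicalSpace E] [MeasurableSpace E] [OpensMeasurableSpace E]
  {μ : Measure E} {U : Set E} {w : E → ℝ} {ε p q s M : ℝ} {k : ℕ}

lemma integrableOn_of_nonneg_of_le {g : E → ℝ} {C : ℝ} (hU : MeasurableSet U) (hμU : μ U ≠ ⊤)
    (hg : ContinuousOn g U) (hg0 : ∀ x ∈ U, 0 ≤ g x) (hgC : ∀ x ∈ U, g x ≤ C) :
    IntegrableOn g U μ :=
  IntegrableOn.of_bound hμU.lt_top (hg.aestronglyMeasurable hU) C <|
    (ae_restrict_mem hU).mono fun x hx => by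
      rw [norm_eq_abs, abs_of_nonneg (hg0 x hx)]
      exact hgC x hx

lemma integrableOn_rpow_of_le (hU : MeasurableSet U) (hμU : μ U ≠ ⊤) (hw : ContinuousOn w U)
    (hw0 : ∀ x ∈ U, 0 ≤ w x) (hwM : ∀ x ∈ U, w x ≤ M) (hp : 0 ≤ p) :
    IntegrableOn (fun x => w x ^ p) U μ :=
  integrableOn_of_nonneg_of_le hU hμU (hw.rpow_const fun _ _ => Or.inr hp)
    (fun x hx => rpow_nonneg (hw0 x hx) p) fun x hx => rpow_le_rpow (hw0 x hx) (hwM x hx) hp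

lemma integrableOn_truncPow_rpow_of_le (hU : MeasurableSet U) (hμU : μ U ≠ ⊤)
    (hw : ContinuousOn w U) (hw0 : ∀ x ∈ U, 0 < w x) (hwM : ∀ x ∈ U, w x ≤ M) (hε : 0 < ε)
    (hk : k ≠ 0) (hq : 0 ≤ q) (hs : 0 ≤ s) :
    IntegrableOn (fun x => truncPow ε q k (w x) ^ s) U μ :=
  integrableOn_rpow_of_le hU hμU ((continuous_truncPow hε hk).comp_continuousOn hw)
    (fun x hx => truncPow_nonneg (hw0 x hx).le) (fun x hx =>
      (truncPow_le_rpow hε.le (hw0 x hx)).trans (rpow_le_rpow (hw0 x hx).le (hwM x hx) hq)) hs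

lemma setIntegral_truncPow_le_setIntegral_rpow (hU : MeasurableSet U) (hμU : μ U ≠ ⊤)
    (hw : ContinuousOn w U) (hw0 : ∀ x ∈ U, 0 < w x) (hwM : ∀ x ∈ U, w x ≤ M) (hε : 0 < ε)
    (hk : k ≠ 0) (hp : 0 ≤ p) :
    ∫ x in U, truncPow ε p k (w x) ∂μ ≤ ∫ x in U, w x ^ p ∂μ := by
  have hint := integrableOn_truncPow_rpow_of_le hU hμU hw hw0 hwM hε hk hp zero_le_one
  simp only [rpow_one] at hint
  exact setIntegral_mono_on hint (integrableOn_rpow_of_le hU hμU hw (fun x hx => (hw0 x hx).le)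
    hwM hp) hU fun x hx => truncPow_le_rpow hε.le (hw0 x hx)

lemma setIntegral_rpow_sub_le_setIntegral_truncPow_rpow (hU : MeasurableSet U) (hμU : μ U ≠ ⊤)
    (hw : ContinuousOn w U) (hw0 : ∀ x ∈ U, 0 < w x) (hwM : ∀ x ∈ U, w x ≤ M) (hε : 0 < ε)
    (hp : 1 ≤ p) (hq : 0 ≤ q) (hs : 0 ≤ s) (hks : 1 ≤ k * s) (hqs : q * s = p) :
    ∫ x in U, w x ^ p ∂μ - k * s * ε * M ^ (p - 1) * μ.real U ≤
      ∫ x in U, truncPow ε q k (w x) ^ s ∂μ := by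
  have hk : k ≠ 0 := by
    rintro rfl
    simp only [Nat.cast_zero, zero_mul] at hks
    linarith
  have hint := integrableOn_rpow_of_le hU hμU hw (fun x hx => (hw0 x hx).le) hwM
    (zero_le_one.trans hp)
  have hconst : IntegrableOn (fun _ => k * s * ε * M ^ (p - 1)) U μ := integrableOn_const hμU
  calc ∫ x in U, w x ^ p ∂μ - k * s * ε * M ^ (p - 1) * μ.real U
      = ∫ x in U, w x ^ p - k * s * ε * M ^ (p - 1) ∂μ := by
        rw [integral_sub hint hconst, setIntegral_const, smul_eq_mul, mul_comm (μ.real U)]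
    _ ≤ ∫ x in U, truncPow ε q k (w x) ^ s ∂μ :=
        setIntegral_mono_on (hint.sub hconst)
          (integrableOn_truncPow_rpow_of_le hU hμU hw hw0 hwM hε hk hq hs) hU
          fun x hx => rpow_sub_le_truncPow_rpow hε.le hp hks hqs (hw0 x hx) (hwM x hx)

lemma eventually_setIntegral_rpow_sub_le_setIntegral_truncPow_rpow (hU : MeasurableSet U)
    (hμU : μ U ≠ ⊤) (hp : 1 ≤ p) (hq : 0 ≤ q) (hs : 0 ≤ s) (hks : 1 ≤ k * s) (hqs : q * s = p)
    (M : ℝ) {δ : ℝ} (hδ : 0 < δ) :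
    ∀ᶠ ε in 𝓝[>] 0, ∀ w : E → ℝ, ContinuousOn w U → (∀ x ∈ U, 0 < w x) → (∀ x ∈ U, w x ≤ M) →
      (∫ x in U, w x ^ p ∂μ) - δ ≤ ∫ x in U, truncPow ε q k (w x) ^ s ∂μ := by
  have herr : Tendsto (fun ε => k * s * ε * M ^ (p - 1) * μ.real U) (𝓝[>] 0) (𝓝 0) := by
    have hcont : Continuous fun ε => k * s * ε * M ^ (p - 1) * μ.real U := by fun_prop
    simpa using (hcont.tendsto 0).mono_left nhdsWithin_le_nhds
  filter_upwards [herr.eventually_le_const hδ, self_mem_nhdsWithin] with ε hεδ hε w hw hw0 hwM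
  exact (sub_le_sub_left hεδ _).trans
    (setIntegral_rpow_sub_le_setIntegral_truncPow_rpow hU hμU hw hw0 hwM hε hp hq hs hks hqs)

end TruncatedIntegral

section Dissipation

variable {d : ℕ} {m p q : ℝ}

lemma exists_setIntegral_rpow_le_integral_norm_fderiv_sq (hd : 3 ≤ d) :
    ∃ C : ℝ, 0 < C ∧ ∀ (U : Set (EuclideanSpace ℝ (Fin d))) (f : EuclideanSpace ℝ (Fin d) → ℝ),
      IsOpen U → (∀ x ∈ U, 0 ≤ f x) → ContDiff ℝ 1 (U.indicator f) →
      HasCompactSupport (U.indicator f) →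
      (∫ x in U, f x ^ (2 * d / (d - 2) : ℝ)) ^ ((d - 2) / d : ℝ) ≤
        C * ∫ x, ‖fderiv ℝ (U.indicator f) x‖ ^ 2 := by
  have hd3 : (3 : ℝ) ≤ d := by exact_mod_cast hd
  have hd2 : (0 : ℝ) < d - 2 := by linarith
  have hS0 : (0 : ℝ) < 2 * d / (d - 2) := by positivity
  obtain ⟨S, hS⟩ : ∃ S : NNReal, (S : ℝ) = 2 * d / (d - 2) := ⟨⟨_, hS0.le⟩, rfl⟩
  rw [← hS] at hS0 ⊢
  obtain ⟨C, hC, hsob⟩ := exists_integral_norm_rpow_le_integral_norm_fderiv_rpow (F := ℝ)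
    (volume : Measure (EuclideanSpace ℝ (Fin d))) (p := 2) (p' := S) one_le_two
    (NNReal.coe_ne_zero.1 hS0.ne') (by rw [finrank_euclideanSpace_fin]; lia)
    (by rw [finrank_euclideanSpace_fin, NNReal.coe_ofNat, hS]; field_simp)
  refine ⟨C, hC, fun U f hU hf0 hf hfc => ?_⟩
  have hset : ∫ x in U, f x ^ (S : ℝ) = ∫ x, ‖U.indicator f x‖ ^ (S : ℝ) := by
    rw [← integral_indicator hU.measurableSet]
    congr with x
    by_cases hx : x ∈ U
    · simp [hx, abs_of_nonneg (hf0 x hx)]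
    · simp [hx, hS0.ne']
  have hexp : (d - 2) / d = (2 : ℝ) / S := by rw [hS]; field_simp
  rw [hset, hexp]
  simpa using hsob _ hf hfc

lemma exists_setIntegral_deriv_truncPow_mul_spaceLap_le (hd : 3 ≤ d) (hm : 0 < m) (hp : 1 < p)
    (hq : 0 < q) (hpq : 2 * q = p + m - 1) :
    ∃ κ : ℝ, 0 < κ ∧ ∀ (ε : ℝ) (U K : Set (EuclideanSpace ℝ (Fin d)))
      (w : EuclideanSpace ℝ (Fin d) → ℝ), 0 < ε → IsOpen U → IsCompact K → K ⊆ U →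
      ContDiffOn ℝ 2 w U → (∀ x ∈ U, 0 < w x) → (∀ x ∈ U \ K, w x ≤ ε) →
      ∫ x in U, deriv (truncPow ε p 3) (w x) * spaceLap (fun y => w y ^ m) x ≤
        -(κ * (∫ x in U, truncPow ε q 3 (w x) ^ (2 * d / (d - 2) : ℝ)) ^ ((d - 2) / d : ℝ)) := by
  obtain ⟨C, hC, hsob⟩ := exists_setIntegral_rpow_le_integral_norm_fderiv_sq hd
  have hc := dissipationConst_pos hm hp hq
  refine ⟨dissipationConst m p q / C, by positivity, ?_⟩
  intro ε U K w hε hU hK hKU hw hpos hwε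
  have hvanish (a : ℝ) : EqOn (truncPow ε a 3) 0 (Iic ε) := fun r hr =>
    truncPow_eq_zero_of_le three_ne_zero hr
  have hqw0 : ∀ x ∈ U \ K, truncPow ε q 3 (w x) = 0 := fun x hx => hvanish q (hwε x hx)
  have hqC1 : ContDiff ℝ 1 (truncPow ε q 3) := contDiff_truncPow hε (by norm_num)
  have hqw : ContDiff ℝ 1 (U.indicator fun x => truncPow ε q 3 (w x)) :=
    contDiff_indicator hU ((tsupport_indicator_subset hK.isClosed hqw0).trans hKU)
      (hqC1.comp_contDiffOn (hw.of_le one_le_two))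
  have henergy := setIntegral_deriv_comp_mul_spaceLap_le (Φ := fun v => v ^ m) hU hK hKU hw hpos
    hwε (contDiff_truncPow hε (by norm_num)) (hvanish p) hqC1 (hvanish q)
    (fun r hr => (contDiffAt_rpow_const_of_ne (ne_of_gt hr)).contDiffWithinAt)
    fun r hr => dissipationConst_mul_sq_deriv_truncPow_le hε hm hp hq hpq hr
  refine henergy.trans (neg_le_neg ?_)
  rw [div_mul_eq_mul_div, div_le_iff₀ hC, mul_assoc, mul_comm _ C]
  gcongr
  exact hsob U _ hU (fun x hx => truncPow_nonneg (hpos x hx).le) hqw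
    (hasCompactSupport_indicator hK hqw0)

end Dissipation

section ParametricIntegral

variable {X E : Type*} [TopologicalSpace X] [FirstCountableTopology X] [TopologicalSpace E]
  [MeasurableSpace E] [OpensMeasurableSpace E] {μ : Measure E} [IsFiniteMeasureOnCompacts μ]

lemma continuousOn_setIntegral_of_continuousOn_prod {I : Set X} {K U : Set E} {f : X → E → ℝ}
    (hI : IsCompact I) (hK : IsCompact K) (hU : MeasurableSet U) (hUK : U ⊆ K)
    (hf : ContinuousOn (fun z : X × E => f z.1 z.2) (I ×ˢ K)) :
    ContinuousOn (fun τ => ∫ x in U, f τ x ∂μ) I := by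
  obtain ⟨C, hC⟩ := (hI.prod hK).exists_bound_of_continuousOn hf
  refine continuousOn_of_dominated (bound := fun _ => C) (fun τ hτ => ?_) (fun τ hτ => ?_)
    (integrableOn_const (measure_ne_top_of_subset hUK hK.measure_lt_top.ne)) ?_
  · exact (hf.comp (f := fun x => (τ, x)) (by fun_prop)
      fun x hx => ⟨hτ, hUK hx⟩).aestronglyMeasurable hU
  · exact (ae_restrict_mem hU).mono fun x hx => hC (τ, x) ⟨hτ, hUK hx⟩
  · exact (ae_restrict_mem hU).mono fun x hx =>
      hf.comp (f := fun τ => (τ, x)) (by fun_prop) fun τ hτ => ⟨hτ, hUK hx⟩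

end ParametricIntegral

lemma hasDerivAt_prodMk_right_of_differentiableAt {E F : Type*} [NormedAddCommGroup E]
    [NormedSpace ℝ E] [NormedAddCommGroup F] [NormedSpace ℝ F] {f : ℝ × E → F} {t : ℝ} {x : E}
    (hf : DifferentiableAt ℝ f (t, x)) :
    HasDerivAt (fun τ => f (τ, x)) (fderiv ℝ f (t, x) (1, 0)) t :=
  hf.hasFDerivAt.comp_hasDerivAt t ((hasDerivAt_id t).prodMk (hasDerivAt_const t x))

namespace IsDirichletSol

variable {d : ℕ} {m p q ρ T t ε : ℝ} {x₀ x : EuclideanSpace ℝ (Fin d)}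
  {u : ℝ → EuclideanSpace ℝ (Fin d) → ℝ} {u₀ : EuclideanSpace ℝ (Fin d) → ℝ}

lemma pos (h : IsDirichletSol m x₀ ρ T u u₀) (ht : t ∈ Ioo 0 T) (hx : x ∈ ball x₀ ρ) :
    0 < u t x :=
  h.2.2.1.1 (t, x) ⟨ht, hx⟩

lemma contDiffOn_uncurry (h : IsDirichletSol m x₀ ρ T u u₀) :
    ContDiffOn ℝ 2 (fun z : ℝ × EuclideanSpace ℝ (Fin d) => u z.1 z.2) (Ioo 0 T ×ˢ ball x₀ ρ) :=
  h.2.2.1.2.1.of_le (WithTop.coe_le_coe.2 le_top)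

lemma contDiffOn (h : IsDirichletSol m x₀ ρ T u u₀) (ht : t ∈ Ioo 0 T) :
    ContDiffOn ℝ 2 (u t) (ball x₀ ρ) :=
  h.contDiffOn_uncurry.comp (f := fun x => (t, x)) (contDiffOn_const.prodMk contDiffOn_id)
    fun _ hx => ⟨ht, hx⟩

lemma hasDerivAt_fderiv (h : IsDirichletSol m x₀ ρ T u u₀) (ht : t ∈ Ioo 0 T)
    (hx : x ∈ ball x₀ ρ) :
    HasDerivAt (fun τ => u τ x)
      (fderiv ℝ (fun z : ℝ × EuclideanSpace ℝ (Fin d) => u z.1 z.2) (t, x) (1, 0)) t := by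
  have hmem : (t, x) ∈ Ioo 0 T ×ˢ ball x₀ ρ := ⟨ht, hx⟩
  have hdiff := (h.contDiffOn_uncurry.contDiffAt
    ((isOpen_Ioo.prod isOpen_ball).mem_nhds hmem)).differentiableAt two_ne_zero
  exact hasDerivAt_prodMk_right_of_differentiableAt hdiff

lemma spaceLap_rpow_eq_fderiv (h : IsDirichletSol m x₀ ρ T u u₀) (ht : t ∈ Ioo 0 T)
    (hx : x ∈ ball x₀ ρ) :
    spaceLap (fun y => u t y ^ m) x =
      fderiv ℝ (fun z : ℝ × EuclideanSpace ℝ (Fin d) => u z.1 z.2) (t, x) (1, 0) :=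
  (h.2.2.1.2.2 (t, x) ⟨ht, hx⟩).symm.trans (h.hasDerivAt_fderiv ht hx).deriv

lemma continuousOn_spaceLap_rpow (h : IsDirichletSol m x₀ ρ T u u₀) :
    ContinuousOn (fun z : ℝ × EuclideanSpace ℝ (Fin d) => spaceLap (fun y => u z.1 y ^ m) z.2)
      (Ioo 0 T ×ˢ ball x₀ ρ) :=
  ((h.contDiffOn_uncurry.continuousOn_fderiv_of_isOpen (isOpen_Ioo.prod isOpen_ball)
    one_le_two).clm_apply continuousOn_const).congr fun _ hz =>
      h.spaceLap_rpow_eq_fderiv hz.1 hz.2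

lemma exists_forall_le (h : IsDirichletSol m x₀ ρ T u u₀) :
    ∃ M, ∀ t ∈ Icc 0 T, ∀ x ∈ closedBall x₀ ρ, u t x ≤ M := by
  obtain ⟨M, hM⟩ :=
    (isCompact_Icc.prod (isCompact_closedBall x₀ ρ)).exists_bound_of_continuousOn h.2.1
  exact ⟨M, fun t ht x hx => (le_abs_self _).trans (hM (t, x) ⟨ht, hx⟩)⟩

lemma exists_isCompact_forall_le (h : IsDirichletSol m x₀ ρ T u u₀) {a b : ℝ} (ha : 0 < a)
    (hb : b ≤ T) (hε : 0 < ε) : ∃ K, IsCompact K ∧ K ⊆ ball x₀ ρ ∧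
      ∀ t ∈ Icc a b, ∀ x ∈ ball x₀ ρ \ K, u t x ≤ ε := by
  have hcyl : IsCompact (Icc a b ×ˢ closedBall x₀ ρ) :=
    isCompact_Icc.prod (isCompact_closedBall x₀ ρ)
  have hcont := h.2.1.mono (prod_mono_left (t := closedBall x₀ ρ) (Icc_subset_Icc ha.le hb))
  have hsuper := hcyl.of_isClosed_subset
    (hcont.preimage_isClosed_of_isClosed hcyl.isClosed (isClosed_Ici (a := ε))) inter_subset_left
  refine ⟨_, hsuper.image continuous_snd, ?_, fun t ht x hx => ?_⟩
  · rintro _ ⟨⟨t, x⟩, ⟨⟨ht, hx⟩, hu : ε ≤ u t x⟩, rfl⟩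
    refine (mem_closedBall.1 hx).lt_of_ne fun hsphere => ?_
    have hzero : u t x = 0 := h.2.2.2.2.1 t ⟨ha.trans_le ht.1, ht.2.trans hb⟩ x hsphere
    linarith
  · by_contra! hlt
    exact hx.2 ⟨(t, x), ⟨⟨ht, ball_subset_closedBall hx.1⟩, hlt.le⟩, rfl⟩

lemma hasDerivAt_setIntegral_comp (h : IsDirichletSol m x₀ ρ T u u₀) (ht : t ∈ Ioo 0 T)
    {G : ℝ → ℝ} (hG : ContDiff ℝ 1 G) (hε : 0 < ε) (hG0 : EqOn G 0 (Iic ε)) :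
    HasDerivAt (fun τ => ∫ x in ball x₀ ρ, G (u τ x))
      (∫ x in ball x₀ ρ, deriv G (u t x) * spaceLap (fun y => u t y ^ m) x) t := by
  obtain ⟨a, ha, hat⟩ := exists_between ht.1
  obtain ⟨b, htb, hbT⟩ := exists_between ht.2
  have hab : Icc a b ⊆ Ioo 0 T := Icc_subset_Ioo ha hbT
  obtain ⟨K, hK, hKU, huε⟩ := h.exists_isCompact_forall_le ha hbT.le hε
  have hG'u : ContinuousOn (fun z : ℝ × EuclideanSpace ℝ (Fin d) => deriv G (u z.1 z.2))
      (Ioo 0 T ×ˢ ball x₀ ρ) :=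
    (hG.continuous_deriv le_rfl).comp_continuousOn h.contDiffOn_uncurry.continuousOn
  refine hasDerivAt_setIntegral_of_eq_zero_off_compact
    (f' := fun τ x => deriv G (u τ x) * spaceLap (fun y => u τ y ^ m) x)
    isCompact_Icc (Icc_mem_nhds hat htb) measurableSet_ball hK hKU
    (fun τ hτ => hG.continuous.comp_continuousOn (h.contDiffOn (hab hτ)).continuousOn)
    ((hG'u.mul h.continuousOn_spaceLap_rpow).mono (prod_mono_left hab)) (fun τ hτ x hx => ?_)
    (fun τ hτ x hx => hG0 (huε τ hτ x hx)) fun τ hτ x hx => ?_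
  · rw [h.spaceLap_rpow_eq_fderiv (hab hτ) hx]
    exact (hG.differentiable one_ne_zero _).hasDerivAt.comp τ (h.hasDerivAt_fderiv (hab hτ) hx)
  · rw [deriv_eq_zero_of_eqOn_Iic hG0 (huε τ hτ x hx), zero_mul]

lemma continuousOn_setIntegral_rpow (h : IsDirichletSol m x₀ ρ T u u₀) (hp : 0 ≤ p) :
    ContinuousOn (fun τ => ∫ x in ball x₀ ρ, u τ x ^ p) (Icc 0 T) :=
  continuousOn_setIntegral_of_continuousOn_prod isCompact_Icc (isCompact_closedBall x₀ ρ)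
    measurableSet_ball ball_subset_closedBall (h.2.1.rpow_const fun _ _ => Or.inr hp)

lemma setIntegral_rpow_nonneg (h : IsDirichletSol m x₀ ρ T u u₀) (ht : t ∈ Icc 0 T) :
    0 ≤ ∫ x in ball x₀ ρ, u t x ^ p :=
  setIntegral_nonneg measurableSet_ball fun x hx =>
    rpow_nonneg (h.1 t ht x (ball_subset_closedBall hx)) p

lemma setIntegral_rpow_zero_eq (h : IsDirichletSol m x₀ ρ T u u₀) :
    ∫ x in ball x₀ ρ, u 0 x ^ p = ∫ x in ball x₀ ρ, u₀ x ^ p :=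
  setIntegral_congr_fun measurableSet_ball fun x hx => congrArg (· ^ p) (h.2.2.2.1 x hx)

lemma setIntegral_rpow_pos (h : IsDirichletSol m x₀ ρ T u u₀) (hp : 0 ≤ p) (ht : t ∈ Ioo 0 T) :
    0 < ∫ x in ball x₀ ρ, u t x ^ p := by
  obtain ⟨M, hM⟩ := h.exists_forall_le
  obtain ⟨y, hy, -⟩ := h.2.2.2.2.2.2 t ht
  have hpow : ∀ x ∈ ball x₀ ρ, 0 < u t x ^ p := fun x hx => rpow_pos_of_pos (h.pos ht hx) p
  have hint : IntegrableOn (fun x => u t x ^ p) (ball x₀ ρ) :=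
    integrableOn_rpow_of_le measurableSet_ball measure_ball_lt_top.ne
      (h.contDiffOn ht).continuousOn (fun x hx => (h.pos ht hx).le)
      (fun x hx => hM t (Ioo_subset_Icc_self ht) x (ball_subset_closedBall hx)) hp
  rw [setIntegral_pos_iff_support_of_nonneg_ae
    ((ae_restrict_mem measurableSet_ball).mono fun x hx => (hpow x hx).le) hint,
    inter_eq_right.2 fun x hx => Function.mem_support.2 (hpow x hx).ne']
  exact measure_ball_pos volume x₀ (pos_of_mem_ball hy)

lemma exists_hasDerivAt_approx_setIntegral_rpow (hd : 3 ≤ d) (hm : 0 < m) (hp : 1 < p)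
    (hq : 0 < q) (hpq : 2 * q = p + m - 1) (hqp : q * (2 * d / (d - 2)) = p) :
    ∃ κ : ℝ, 0 < κ ∧ ∀ (x₀ : EuclideanSpace ℝ (Fin d)) (ρ T : ℝ)
      (u : ℝ → EuclideanSpace ℝ (Fin d) → ℝ) (u₀ : EuclideanSpace ℝ (Fin d) → ℝ),
      IsDirichletSol m x₀ ρ T u u₀ → ∀ s t, 0 < s → t < T → ∀ δ > 0, ∃ Y D : ℝ → ℝ,
      ∀ τ ∈ Icc s t, HasDerivAt Y (D τ) τ ∧ (∫ x in ball x₀ ρ, u τ x ^ p) - δ ≤ Y τ ∧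
        Y τ ≤ ∫ x in ball x₀ ρ, u τ x ^ p ∧
        D τ ≤ -(κ * max ((∫ x in ball x₀ ρ, u τ x ^ p) - δ) 0 ^ ((d - 2) / d : ℝ)) := by
  have hd3 : (3 : ℝ) ≤ d := by exact_mod_cast hd
  have hd2 : (0 : ℝ) < d - 2 := by linarith
  have hS : 1 ≤ 2 * d / (d - 2 : ℝ) := by rw [one_le_div hd2]; linarith
  obtain ⟨κ, hκ, hdiss⟩ := exists_setIntegral_deriv_truncPow_mul_spaceLap_le hd hm hp hq hpq
  refine ⟨κ, hκ, fun x₀ ρ T u u₀ h s t hs htT δ hδ => ?_⟩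
  obtain ⟨M, hM⟩ := h.exists_forall_le
  have hfin : volume (ball x₀ ρ) ≠ ⊤ := measure_ball_lt_top.ne
  have hlow {a r : ℝ} (ha : 0 ≤ a) (hr : 1 ≤ r) (har : a * r = p) :=
    eventually_setIntegral_rpow_sub_le_setIntegral_truncPow_rpow (k := 3) measurableSet_ball hfin
      hp.le ha (zero_le_one.trans hr) (by norm_num; linarith) har M hδ
  obtain ⟨ε, ⟨hlowp, hlowq⟩, hε : 0 < ε⟩ :=
    (((hlow (zero_le_one.trans hp.le) le_rfl (mul_one p)).and (hlow hq.le hS hqp)).and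
      self_mem_nhdsWithin).exists
  simp only [rpow_one] at hlowp
  obtain ⟨K, hK, hKU, huε⟩ := h.exists_isCompact_forall_le hs htT.le hε
  refine ⟨fun τ => ∫ x in ball x₀ ρ, truncPow ε p 3 (u τ x),
    fun τ => ∫ x in ball x₀ ρ, deriv (truncPow ε p 3) (u τ x) * spaceLap (fun y => u τ y ^ m) x,
    fun τ hτ => ?_⟩
  have hτT : τ ∈ Ioo 0 T := Icc_subset_Ioo hs htT hτ
  have hcont := (h.contDiffOn hτT).continuousOn
  have hpos : ∀ x ∈ ball x₀ ρ, 0 < u τ x := fun x hx => h.pos hτT hx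
  have huM : ∀ x ∈ ball x₀ ρ, u τ x ≤ M := fun x hx =>
    hM τ (Ioo_subset_Icc_self hτT) x (ball_subset_closedBall hx)
  refine ⟨h.hasDerivAt_setIntegral_comp hτT (contDiff_truncPow hε (by norm_num)) hε fun r hr =>
    truncPow_eq_zero_of_le three_ne_zero hr, hlowp _ hcont hpos huM,
    setIntegral_truncPow_le_setIntegral_rpow measurableSet_ball hfin hcont hpos huM hε three_ne_zero
      (zero_le_one.trans hp.le), ?_⟩
  refine (hdiss ε _ K _ hε isOpen_ball hK hKU (h.contDiffOn hτT) hpos (huε τ hτ)).trans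
    (neg_le_neg ?_)
  gcongr
  exact max_le (hlowq _ hcont hpos huM) (setIntegral_nonneg measurableSet_ball fun x hx =>
    rpow_nonneg (truncPow_nonneg (hpos x hx).le) _)

lemma exists_rpow_setIntegral_rpow_le_sub_of_mem_Ioo (hd : 3 ≤ d) (hm : 0 < m) (hp : 1 < p)
    (hq : 0 < q) (hpq : 2 * q = p + m - 1) (hqp : q * (2 * d / (d - 2)) = p) :
    ∃ K : ℝ, 0 < K ∧ ∀ (x₀ : EuclideanSpace ℝ (Fin d)) (ρ T : ℝ)
      (u : ℝ → EuclideanSpace ℝ (Fin d) → ℝ) (u₀ : EuclideanSpace ℝ (Fin d) → ℝ),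
      IsDirichletSol m x₀ ρ T u u₀ → ∀ s ∈ Ioo 0 T, ∀ t ∈ Ioo 0 T, s ≤ t →
      (∫ x in ball x₀ ρ, u t x ^ p) ^ (2 / d : ℝ) ≤
        (∫ x in ball x₀ ρ, u s x ^ p) ^ (2 / d : ℝ) - K * (t - s) := by
  have hd3 : (3 : ℝ) ≤ d := by exact_mod_cast hd
  have hθ : (2 / d : ℝ) = 1 - (d - 2) / d := by field_simp; ring
  obtain ⟨κ, hκ, happrox⟩ := exists_hasDerivAt_approx_setIntegral_rpow hd hm hp hq hpq hqp
  refine ⟨2 / d * κ, by positivity, fun x₀ ρ T u u₀ h s hs t ht hst => ?_⟩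
  rw [hθ]
  exact rpow_le_rpow_sub_of_forall_approx (F := fun τ => ∫ x in ball x₀ ρ, u τ x ^ p) hst hκ.le
    (div_nonneg (by linarith) (by linarith)) (by rw [div_lt_one (by linarith)]; linarith)
    (h.setIntegral_rpow_pos (zero_le_one.trans hp.le) ht) (happrox x₀ ρ T u u₀ h s t hs.1 ht.2)

lemma exists_rpow_setIntegral_rpow_le_sub (hd : 3 ≤ d) (hm : 0 < m) (hmc : m < (d - 2 : ℝ) / d) :
    ∃ K : ℝ, 0 < K ∧ ∀ (x₀ : EuclideanSpace ℝ (Fin d)) (ρ T : ℝ)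
      (u : ℝ → EuclideanSpace ℝ (Fin d) → ℝ) (u₀ : EuclideanSpace ℝ (Fin d) → ℝ),
      IsDirichletSol m x₀ ρ T u u₀ → ∀ s ∈ Icc 0 T, ∀ t ∈ Icc 0 T, s ≤ t →
      (∫ x in ball x₀ ρ, u t x ^ (d * (1 - m) / 2)) ^ (2 / d : ℝ) ≤
        (∫ x in ball x₀ ρ, u s x ^ (d * (1 - m) / 2)) ^ (2 / d : ℝ) - K * (t - s) := by
  have hd3 : (3 : ℝ) ≤ d := by exact_mod_cast hd
  have hd2 : (0 : ℝ) < d - 2 := by linarith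
  have hmd : m * d < d - 2 := (lt_div_iff₀ (by linarith)).1 hmc
  have hm1 : 0 < 1 - m := by nlinarith
  have hp : 1 < d * (1 - m) / 2 := by linarith
  obtain ⟨K, hK, hdecay⟩ := exists_rpow_setIntegral_rpow_le_sub_of_mem_Ioo
    (q := (1 - m) * (d - 2) / 4) hd hm hp (by positivity) (by ring) (by field_simp; ring)
  refine ⟨K, hK, fun x₀ ρ T u u₀ h s hs t ht hst => ?_⟩
  have hcont : ContinuousOn (fun τ => (∫ x in ball x₀ ρ, u τ x ^ (d * (1 - m) / 2)) ^ (2 / d : ℝ)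
      + K * τ) (Icc 0 T) :=
    ((h.continuousOn_setIntegral_rpow (zero_le_one.trans hp.le)).rpow_const
      fun _ _ => Or.inr (by positivity)).add (by fun_prop)
  have hanti := antitoneOn_Icc_of_antitoneOn_Ioo hcont fun τ hτ σ hσ hτσ => by
    linarith [hdecay x₀ ρ T u u₀ h τ hτ σ hσ hτσ]
  linarith [hanti hs ht hst]

end IsDirichletSol

lemma rpow_div_mul_rpow {y a b c : ℝ} (hy : 0 ≤ y) (hc : c ≠ 0) :
    (y ^ (a / (b * c))) ^ c = y ^ (a / b) := by
  rw [← rpow_mul hy, div_mul_eq_mul_div, mul_div_mul_right _ _ hc]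

/-- **Decay of the `L^{p_c}` norm and universal upper bound on the extinction time
(Section 1.4.1).** Here `p_c = d(1-m)/2`. -/
theorem Lpc_decay_and_extinction_bound
    (d : ℕ) (hd : 3 ≤ d) (m : ℝ) (hm0 : 0 < m) (hmc : m < (d - 2 : ℝ) / d) :
    ∃ K : ℝ, 0 < K ∧
      ∀ (x₀ : EuclideanSpace ℝ (Fin d)) (ρ T : ℝ), 0 < ρ → 0 < T →
      ∀ (u : ℝ → EuclideanSpace ℝ (Fin d) → ℝ) (u₀ : EuclideanSpace ℝ (Fin d) → ℝ),
        (∀ x ∈ ball x₀ ρ, 0 ≤ u₀ x) →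
        IntegrableOn (fun x => u₀ x ^ (d * (1 - m) / 2)) (ball x₀ ρ) →
        IsDirichletSol m x₀ ρ T u u₀ →
        (∀ s t : ℝ, 0 ≤ s → s ≤ t → t ≤ T →
          ((∫ x in ball x₀ ρ, u t x ^ (d * (1 - m) / 2)) ^
              (2 / (d * (1 - m)))) ^ (1 - m) ≤
            ((∫ x in ball x₀ ρ, u s x ^ (d * (1 - m) / 2)) ^
              (2 / (d * (1 - m)))) ^ (1 - m) - K * (t - s)) ∧
        T ≤ K⁻¹ *
          ((∫ x in ball x₀ ρ, u₀ x ^ (d * (1 - m) / 2)) ^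
            (2 / (d * (1 - m)))) ^ (1 - m) := by
  have hd3 : (3 : ℝ) ≤ d := by exact_mod_cast hd
  have hm1 : m < 1 := hmc.trans (by rw [div_lt_one (by linarith)]; linarith)
  obtain ⟨K, hK, hdecay⟩ := IsDirichletSol.exists_rpow_setIntegral_rpow_le_sub hd hm0 hmc
  refine ⟨K, hK, fun x₀ ρ T _ hT u u₀ _ _ h => ?_⟩
  have hnorm : ∀ t ∈ Icc 0 T,
      ((∫ x in ball x₀ ρ, u t x ^ (d * (1 - m) / 2)) ^ (2 / (d * (1 - m)))) ^ (1 - m) =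
        (∫ x in ball x₀ ρ, u t x ^ (d * (1 - m) / 2)) ^ (2 / d : ℝ) := fun t ht =>
    rpow_div_mul_rpow (h.setIntegral_rpow_nonneg ht) (sub_pos.2 hm1).ne'
  have h0 : 0 ∈ Icc 0 T := left_mem_Icc.2 hT.le
  have hTT : T ∈ Icc 0 T := right_mem_Icc.2 hT.le
  refine ⟨fun s t hs hst htT => ?_, ?_⟩
  · have hsT : s ∈ Icc 0 T := ⟨hs, hst.trans htT⟩
    have htT' : t ∈ Icc 0 T := ⟨hs.trans hst, htT⟩
    rw [hnorm t htT', hnorm s hsT]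
    exact hdecay x₀ ρ T u u₀ h s hsT t htT' hst
  · rw [← h.setIntegral_rpow_zero_eq, hnorm 0 h0, le_inv_mul_iff₀ hK]
    linarith [hdecay x₀ ρ T u u₀ h 0 h0 T hTT hT.le,
      rpow_nonneg (h.setIntegral_rpow_nonneg (p := d * (1 - m) / 2) hTT) (2 / d)]
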